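/- Converse bound R_Y ≥ 1/(K−1): in the cyclic hierarchical secure aggregation model with relay security, (K−1) · Σ_{k=1}^K H(Y_k) ≥ K · L; equivalently, the entropic relay-to-server rate R_Y^H = (Σ_{k=1}^K H(Y_k))/(K·L) satisfies R_Y^H ≥ 1/(K−1). -/

import Mathlib

/-!
Fix a relay `j`. Let `T` be everything relay `j` receives and `S` the sum of the inputs.
By relay security `T` is independent of all the inputs, hence of `S`, so
`H(S) + H(T) ≤ H(S, T)` (`ent_add_le_of_mutInfo_zero`). On the other hand `Y_j` is a function
of `T`, so the messages `Y_i` with `i ≠ j` together with `T` determine all the `Y_i`, hence `S`;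
therefore `H(S, T) ≤ H((Y_i)_{i ≠ j}) + H(T)`. Thus `L = H(S) ≤ ∑_{i ≠ j} H(Y_i)`, and summing
over the `K` relays `j` counts each `H(Y_i)` exactly `K - 1` times.

The Shannon inequalities used all come from monotonicity (`ent_mono`) and strong subadditivity
(`ent_submod`). Both rest on `ent_eq_expect`, the expression of the entropy as an expected
surprisal over the sample space.
-/

open scoped BigOperators

noncomputable def pr {Ω : Type} [Fintype Ω] {α : Type} [DecidableEq α]
    (p : Ω → ℝ) (X : Ω → α) (a : α) : ℝ :=
  ∑ ω, if X ω = a then p ω else 0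

noncomputable def ent {Ω : Type} [Fintype Ω] {α : Type} [Fintype α] [DecidableEq α]
    (q : ℕ) (p : Ω → ℝ) (X : Ω → α) : ℝ :=
  -∑ a, pr p X a * Real.logb q (pr p X a)

noncomputable def condEnt {Ω : Type} [Fintype Ω] {α β : Type}
    [Fintype α] [DecidableEq α] [Fintype β] [DecidableEq β]
    (q : ℕ) (p : Ω → ℝ) (X : Ω → α) (Y : Ω → β) : ℝ :=
  ent q p (fun ω => (X ω, Y ω)) - ent q p Y

noncomputable def mutInfo {Ω : Type} [Fintype Ω] {α β : Type}
    [Fintype α] [DecidableEq α] [Fintype β] [DecidableEq β]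
    (q : ℕ) (p : Ω → ℝ) (X : Ω → α) (Y : Ω → β) : ℝ :=
  ent q p X + ent q p Y - ent q p (fun ω => (X ω, Y ω))

noncomputable def condMutInfo {Ω : Type} [Fintype Ω] {α β γ : Type}
    [Fintype α] [DecidableEq α] [Fintype β] [DecidableEq β] [Fintype γ] [DecidableEq γ]
    (q : ℕ) (p : Ω → ℝ) (X : Ω → α) (Y : Ω → β) (Z : Ω → γ) : ℝ :=
  condEnt q p X Z + condEnt q p Y Z - condEnt q p (fun ω => (X ω, Y ω)) Z

def IsPMF {Ω : Type} [Fintype Ω] (p : Ω → ℝ) : Prop :=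
  (∀ ω, 0 ≤ p ω) ∧ ∑ ω, p ω = 1

def IndepRV {Ω : Type} [Fintype Ω] {α β : Type} [DecidableEq α] [DecidableEq β]
    (p : Ω → ℝ) (X : Ω → α) (Y : Ω → β) : Prop :=
  ∀ a b, pr p (fun ω => (X ω, Y ω)) (a, b) = pr p X a * pr p Y b

/-- The set of `B` relays `{k, k+1, …, k+B−1}` (indices mod `K`) associated with user `k`. -/
def Bset (K B : ℕ) (k : Fin K) : Finset (Fin K) :=
  (Finset.range B).image fun j => ⟨((k : ℕ) + j) % K, Nat.mod_lt _ k.pos⟩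

/-- The set of users associated with relay `i`. -/
def Uset (K B : ℕ) (i : Fin K) : Finset (Fin K) :=
  Finset.univ.filter fun k => i ∈ Bset K B k

/-! ### Entropy inequalities -/

section Entropy

variable {Ω : Type} [Fintype Ω] {p : Ω → ℝ}

lemma pr_nonneg (hp : IsPMF p) {α : Type} [DecidableEq α] (X : Ω → α) (a : α) :
    0 ≤ pr p X a :=
  Finset.sum_nonneg fun ω _ => by split_ifs; exacts [hp.1 ω, le_rfl]

lemma pr_pos (hp : IsPMF p) {α : Type} [DecidableEq α] (X : Ω → α) {ω : Ω} (h : 0 < p ω) :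
    0 < pr p X (X ω) := by
  refine Finset.sum_pos' (fun ω' _ => ?_) ⟨ω, Finset.mem_univ _, by simpa using h⟩
  split_ifs
  exacts [hp.1 ω', le_rfl]

lemma sum_pr_mul {α : Type} [Fintype α] [DecidableEq α] (p : Ω → ℝ) (X : Ω → α) (g : α → ℝ) :
    ∑ a, pr p X a * g a = ∑ ω, p ω * g (X ω) := by
  simp only [pr, Finset.sum_mul]
  rw [Finset.sum_comm]
  simp [ite_mul]

lemma sum_pr (hp : IsPMF p) {α : Type} [Fintype α] [DecidableEq α] (X : Ω → α) :
    ∑ a, pr p X a = 1 := by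
  simpa [hp.2] using sum_pr_mul p X fun _ => 1

/-- A marginal of a joint law. -/
lemma sum_pr_pair {α β : Type} [Fintype α] [DecidableEq α] [DecidableEq β]
    (p : Ω → ℝ) (X : Ω → α) (Z : Ω → β) (z : β) :
    ∑ a, pr p (fun ω => (X ω, Z ω)) (a, z) = pr p Z z := by
  simp only [pr]
  rw [Finset.sum_comm]
  refine Finset.sum_congr rfl fun ω _ => ?_
  simp [Prod.mk.injEq, ite_and]

lemma ent_eq_expect (q : ℕ) (p : Ω → ℝ) {α : Type} [Fintype α] [DecidableEq α] (X : Ω → α) :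
    ent q p X = -∑ ω, p ω * Real.logb q (pr p X (X ω)) := by
  rw [ent, sum_pr_mul p X fun a => Real.logb q (pr p X a)]

/-- If `Y` is a function of `X` (as maps on the sample space) then `H(Y) ≤ H(X)`. -/
lemma ent_mono {q : ℕ} (hq : 1 < q) (hp : IsPMF p) {α β : Type} [Fintype α] [DecidableEq α]
    [Fintype β] [DecidableEq β] (X : Ω → α) (Y : Ω → β)
    (h : ∀ ω ω', X ω = X ω' → Y ω = Y ω') : ent q p Y ≤ ent q p X := by
  rw [ent_eq_expect, ent_eq_expect]
  refine neg_le_neg (Finset.sum_le_sum fun ω _ => ?_)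
  rcases (hp.1 ω).eq_or_lt with h0 | h0
  · simp [← h0]
  refine mul_le_mul_of_nonneg_left ?_ h0.le
  refine Real.logb_le_logb_of_le (by exact_mod_cast hq) (pr_pos hp X h0) ?_
  refine Finset.sum_le_sum fun ω' _ => ?_
  by_cases hx : X ω' = X ω
  · simp [hx, h _ _ hx]
  · simp only [hx, if_false]
    split_ifs
    exacts [hp.1 ω', le_rfl]

/-- Strong subadditivity `H(X,Y,Z) + H(Z) ≤ H(X,Z) + H(Y,Z)`. By `log t ≤ t - 1`, the difference
is controlled by the total mass of `p(x,z) p(y,z) / p(z)`, which is at most one. -/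
lemma ent_submod {q : ℕ} (hq : 1 < q) (hp : IsPMF p) {α β γ : Type} [Fintype α] [DecidableEq α]
    [Fintype β] [DecidableEq β] [Fintype γ] [DecidableEq γ]
    (X : Ω → α) (Y : Ω → β) (Z : Ω → γ) :
    ent q p (fun ω => (X ω, Y ω, Z ω)) + ent q p Z ≤
      ent q p (fun ω => (X ω, Z ω)) + ent q p (fun ω => (Y ω, Z ω)) := by
  have hlq : 0 < Real.log (q : ℝ) := Real.log_pos (by exact_mod_cast hq)
  set a : α × β × γ → ℝ := pr p (fun ω => (X ω, Y ω, Z ω)) with ha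
  set b : α × γ → ℝ := pr p (fun ω => (X ω, Z ω)) with hb
  set c : β × γ → ℝ := pr p (fun ω => (Y ω, Z ω)) with hc
  set d : γ → ℝ := pr p Z with hd
  have hmass : ∑ t : α × β × γ, a t * (b (t.1, t.2.2) * c t.2 / (a t * d t.2.2)) ≤ 1 := by
    calc ∑ t : α × β × γ, a t * (b (t.1, t.2.2) * c t.2 / (a t * d t.2.2))
        ≤ ∑ t : α × β × γ, b (t.1, t.2.2) * c t.2 / d t.2.2 := by
          refine Finset.sum_le_sum fun t _ => ?_
          have hnn : 0 ≤ b (t.1, t.2.2) * c t.2 / d t.2.2 :=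
            div_nonneg (mul_nonneg (pr_nonneg hp _ _) (pr_nonneg hp _ _)) (pr_nonneg hp _ _)
          by_cases h0 : a t = 0
          · simpa [h0] using hnn
          · rw [← div_div, div_right_comm, mul_div_cancel₀ _ h0]
      _ = ∑ z, ∑ y, ∑ x, b (x, z) * c (y, z) / d z := by
          rw [Fintype.sum_prod_type, Finset.sum_comm, Fintype.sum_prod_type, Finset.sum_comm]
      _ = ∑ z, d z * d z / d z := by
          refine Finset.sum_congr rfl fun z _ => ?_
          have h1 : ∑ x, b (x, z) = d z := sum_pr_pair p X Z z
          have h2 : ∑ y, c (y, z) = d z := sum_pr_pair p Y Z z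
          simp only [← Finset.sum_div, ← Finset.sum_mul, ← Finset.mul_sum, h1, h2]
      _ = 1 := by
          simp only [mul_self_div_self]
          exact sum_pr hp Z
  rw [sum_pr_mul p (fun ω => (X ω, Y ω, Z ω))
    (fun t => b (t.1, t.2.2) * c t.2 / (a t * d t.2.2))] at hmass
  have hpt : ∀ ω, p ω * (Real.logb q (b (X ω, Z ω)) + Real.logb q (c (Y ω, Z ω))
      - Real.logb q (a (X ω, Y ω, Z ω)) - Real.logb q (d (Z ω))) ≤
      (p ω * (b (X ω, Z ω) * c (Y ω, Z ω) / (a (X ω, Y ω, Z ω) * d (Z ω))) - p ω)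
        / Real.log q := by
    intro ω
    rcases (hp.1 ω).eq_or_lt with h0 | h0
    · simp [← h0]
    have h1 : 0 < a (X ω, Y ω, Z ω) := pr_pos hp (fun ω => (X ω, Y ω, Z ω)) h0
    have h2 : 0 < b (X ω, Z ω) := pr_pos hp (fun ω => (X ω, Z ω)) h0
    have h3 : 0 < c (Y ω, Z ω) := pr_pos hp (fun ω => (Y ω, Z ω)) h0
    have h4 : 0 < d (Z ω) := pr_pos hp Z h0
    have hl := Real.log_le_sub_one_of_pos (div_pos (mul_pos h2 h3) (mul_pos h1 h4))
    rw [Real.log_div (by positivity) (by positivity), Real.log_mul h2.ne' h3.ne',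
      Real.log_mul h1.ne' h4.ne'] at hl
    rw [le_div_iff₀ hlq]
    simp only [Real.logb]
    have := mul_le_mul_of_nonneg_left hl h0.le
    field_simp at this ⊢
    linarith
  have hsum := Finset.sum_le_sum fun ω (_ : ω ∈ Finset.univ) => hpt ω
  rw [← Finset.sum_div, Finset.sum_sub_distrib, hp.2] at hsum
  have hneg := hsum.trans (div_nonpos_of_nonpos_of_nonneg (sub_nonpos.2 hmass) hlq.le)
  simp only [mul_sub, mul_add, Finset.sum_sub_distrib, Finset.sum_add_distrib] at hneg
  simp only [ent_eq_expect]
  linarith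

lemma ent_pair_le {q : ℕ} (hq : 1 < q) (hp : IsPMF p) {α β : Type} [Fintype α] [DecidableEq α]
    [Fintype β] [DecidableEq β] (X : Ω → α) (Y : Ω → β) :
    ent q p (fun ω => (X ω, Y ω)) ≤ ent q p X + ent q p Y := by
  have h := ent_submod hq hp X Y (fun _ => ())
  have h0 : ent q p (fun _ : Ω => ()) = 0 := by simp [ent_eq_expect, pr, hp.2]
  have h1 := ent_mono hq hp (fun ω => (X ω, Y ω, ())) (fun ω => (X ω, Y ω)) (by simp)
  have h2 := ent_mono hq hp X (fun ω => (X ω, ())) (by simp)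
  have h3 := ent_mono hq hp Y (fun ω => (Y ω, ())) (by simp)
  linarith

lemma ent_tuple_le {q : ℕ} (hq : 1 < q) (hp : IsPMF p) {ι υ : Type} [DecidableEq ι]
    [Fintype υ] [DecidableEq υ] (Y : ι → Ω → υ) (s : Finset ι) :
    ent q p (fun ω => fun i : {i // i ∈ s} => Y i.1 ω) ≤ ∑ i ∈ s, ent q p (Y i) := by
  induction s using Finset.induction_on with
  | empty =>
    have h := ent_mono hq hp (fun _ : Ω => ())
      (fun ω => fun i : {i // i ∈ (∅ : Finset ι)} => Y i.1 ω)
      (fun _ _ _ => funext fun i => absurd i.2 (Finset.notMem_empty _))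
    have h0 : ent q p (fun _ : Ω => ()) = 0 := by simp [ent_eq_expect, pr, hp.2]
    simpa [h0] using h
  | insert a s ha ih =>
    rw [Finset.sum_insert ha]
    have h := ent_mono hq hp (fun ω => (Y a ω, fun i : {i // i ∈ s} => Y i.1 ω))
      (fun ω => fun i : {i // i ∈ insert a s} => Y i.1 ω) (by
        intro ω ω' h
        obtain ⟨h1, h2⟩ := Prod.mk.inj h
        funext ⟨i, hi⟩
        rcases Finset.mem_insert.1 hi with rfl | hi
        · exact h1
        · exact congrFun h2 ⟨i, hi⟩)
    have := ent_pair_le hq hp (Y a) (fun ω => fun i : {i // i ∈ s} => Y i.1 ω)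
    linarith

/-- Subadditivity for a variable `U` determined by the family `(Y i)_{i ∈ s}`. -/
lemma ent_le_sum {q : ℕ} (hq : 1 < q) (hp : IsPMF p) {ι υ δ : Type} [DecidableEq ι]
    [Fintype υ] [DecidableEq υ] [Fintype δ] [DecidableEq δ] (Y : ι → Ω → υ) (s : Finset ι)
    (U : Ω → δ) (hU : ∀ ω ω', (∀ i ∈ s, Y i ω = Y i ω') → U ω = U ω') :
    ent q p U ≤ ∑ i ∈ s, ent q p (Y i) :=
  (ent_mono hq hp (fun ω => fun i : {i // i ∈ s} => Y i.1 ω) U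
    fun ω ω' h => hU ω ω' fun i hi => congrFun h ⟨i, hi⟩).trans (ent_tuple_le hq hp Y s)

/-! ### Security, recovery and the entropy of the sum -/

/-- If `T` and `W` have zero mutual information and `S` is a function of `W`, then `S` and `T`
satisfy `H(S) + H(T) ≤ H(S, T)`. -/
lemma ent_add_le_of_mutInfo_zero {q : ℕ} (hq : 1 < q) (hp : IsPMF p) {α β γ : Type}
    [Fintype α] [DecidableEq α] [Fintype β] [DecidableEq β] [Fintype γ] [DecidableEq γ]
    (T : Ω → α) (W : Ω → β) (S : Ω → γ) (hS : ∀ ω ω', W ω = W ω' → S ω = S ω')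
    (h : mutInfo q p T W = 0) :
    ent q p S + ent q p T ≤ ent q p (fun ω => (T ω, S ω)) := by
  have h1 := ent_submod hq hp T W S
  have h2 := ent_mono hq hp W (fun ω => (W ω, S ω)) fun ω ω' e => by simp [e, hS _ _ e]
  have h3 := ent_mono hq hp (fun ω => (T ω, W ω, S ω)) (fun ω => (T ω, W ω))
    (by simp +contextual)
  rw [mutInfo] at h
  linarith

/-- In the application `V` is the tuple of all relay messages, `R` the message of one relay, `U`
the remaining ones and `T` what that relay receives: `S` is almost surely a function of `V`,
`R` almost surely a function of `T`, and `(U, R)` determines `V`. Hence `(T, S)` carries at most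
the entropy `H(U) + H(T)`. -/
lemma ent_pair_le_of_recover {q : ℕ} (hq : 1 < q) (hp : IsPMF p) {α β γ δ ε : Type}
    [Fintype α] [DecidableEq α] [Fintype β] [DecidableEq β] [Fintype γ] [DecidableEq γ]
    [Fintype δ] [DecidableEq δ] [Fintype ε] [DecidableEq ε]
    (T : Ω → α) (S : Ω → β) (V : Ω → γ) (U : Ω → δ) (R : Ω → ε)
    (hSV : condEnt q p S V = 0) (hRT : condEnt q p R T = 0)
    (hV : ∀ ω ω', U ω = U ω' → R ω = R ω' → V ω = V ω') :
    ent q p (fun ω => (T ω, S ω)) ≤ ent q p U + ent q p T := by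
  rw [condEnt] at hSV hRT
  have h1 := ent_submod hq hp S T V
  have h2 := ent_mono hq hp (fun ω => (S ω, T ω, V ω)) (fun ω => (T ω, S ω))
    (by simp +contextual)
  have h3 := ent_mono hq hp (fun ω => (U ω, R ω, T ω)) (fun ω => (T ω, V ω)) (by
    intro ω ω' h
    simp only [Prod.mk.injEq] at h ⊢
    exact ⟨h.2.2, hV _ _ h.1 h.2.1⟩)
  have h4 := ent_pair_le hq hp U (fun ω => (R ω, T ω))
  linarith

/-- The sum of jointly uniform inputs is uniform, so it has entropy `L`. Uniformity is obtained
by translating one input: `w ↦ w + s·e_{i₀}` carries the fibre of the sum over `0` to the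
fibre over `s`. -/
lemma ent_sum_eq (hp : IsPMF p) {ι F : Type} [Fintype ι] [DecidableEq ι] [Field F] [Fintype F]
    [DecidableEq F] {L : ℕ} (i₀ : ι) (W : ι → Ω → (Fin L → F)) (c : ℝ)
    (hW : ∀ w : ι → Fin L → F, pr p (fun ω => fun k => W k ω) w = c) :
    ent (Fintype.card F) p (fun ω => ∑ k, W k ω) = L := by
  have hq : 1 < Fintype.card F := Fintype.one_lt_card
  have hq' : (1 : ℝ) < Fintype.card F := by exact_mod_cast hq
  have hpush : ∀ s, pr p (fun ω => ∑ k, W k ω) s =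
      ∑ w : ι → Fin L → F, if ∑ k, w k = s then c else 0 := by
    intro s
    have h := sum_pr_mul p (fun ω => fun k => W k ω)
      (fun w => if ∑ k, w k = s then (1 : ℝ) else 0)
    simp only [hW, mul_ite, mul_one, mul_zero] at h
    rw [h, pr]
  have hconst : ∀ s, pr p (fun ω => ∑ k, W k ω) s = pr p (fun ω => ∑ k, W k ω) 0 := by
    intro s
    rw [hpush, hpush, ← Equiv.sum_comp (Equiv.addRight (Pi.single i₀ s : ι → Fin L → F))]
    refine Finset.sum_congr rfl fun w _ => ?_
    have : ∑ k, (w + (Pi.single i₀ s : ι → Fin L → F)) k = ∑ k, w k + s := by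
      simp [Finset.sum_add_distrib]
    rw [Equiv.coe_addRight, this]
    simp
  have htot := sum_pr hp (fun ω => ∑ k, W k ω)
  simp only [hconst, Finset.sum_const, Finset.card_univ, nsmul_eq_mul, Fintype.card_pi,
    Finset.prod_const, Fintype.card_fin, Nat.cast_pow] at htot
  have hval : pr p (fun ω => ∑ k, W k ω) 0 = ((Fintype.card F : ℝ) ^ L)⁻¹ :=
    eq_inv_of_mul_eq_one_right htot
  rw [ent_eq_expect]
  simp only [hconst, hval, Real.logb_inv, Real.logb_pow, ← Finset.sum_mul, hp.2,
    Real.logb_self_eq_one hq']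
  ring

end Entropy

/-! ### The converse bound -/

/-- converse bound `R_Y ≥ 1/(K−1)` under relay security:
`(K−1) · Σ_{k=1}^K H(Y_k) ≥ K · L`. -/
theorem hsa_RY_ge_one_div_K_sub_one
    {K B L : ℕ} (hK : 2 ≤ K) (hB1 : 1 ≤ B) (hBK : B ≤ K) (hL : 1 ≤ L)
    {F : Type} [Field F] [Fintype F] [DecidableEq F]
    {Ω : Type} [Fintype Ω] (p : Ω → ℝ) (hp : IsPMF p)
    {ζ χ υ : Type} [Fintype ζ] [DecidableEq ζ] [Fintype χ] [DecidableEq χ]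
    [Fintype υ] [DecidableEq υ]
    (W : Fin K → Ω → (Fin L → F)) (Z : Fin K → Ω → ζ)
    (Xm : Fin K → Fin K → Ω → χ) (Y : Fin K → Ω → υ)
    -- the inputs are i.i.d. uniform on 𝔽_q^L
    (hW : ∀ w : Fin K → Fin L → F,
      pr p (fun ω => fun k => W k ω) w = 1 / (Fintype.card F : ℝ) ^ (K * L))
    -- the inputs are independent of the keys
    (hWZ : IndepRV p (fun ω => fun k => W k ω) (fun ω => fun k => Z k ω))
    -- user messages are functions of the user's input and key
    (hX : ∀ k : Fin K,
      condEnt (Fintype.card F) p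
        (fun ω => fun i : {i // i ∈ Bset K B k} => Xm k i.1 ω)
        (fun ω => (W k ω, Z k ω)) = 0)
    -- relay messages are functions of the received messages
    (hY : ∀ i : Fin K,
      condEnt (Fintype.card F) p (Y i)
        (fun ω => fun k : {k // k ∈ Uset K B i} => Xm k.1 i ω) = 0)
    -- the server recovers the sum of the inputs
    (hRec : condEnt (Fintype.card F) p
      (fun ω => ∑ k, W k ω) (fun ω => fun i => Y i ω) = 0)
    -- relay security
    (hRelaySec : ∀ i : Fin K,
      mutInfo (Fintype.card F) p
        (fun ω => fun k : {k // k ∈ Uset K B i} => Xm k.1 i ω)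
        (fun ω => fun k => W k ω) = 0) :
    ((K : ℝ) - 1) * (∑ k, ent (Fintype.card F) p (Y k)) ≥ (K : ℝ) * L := by
  have hq : 1 < Fintype.card F := Fintype.one_lt_card
  have hH := ent_sum_eq hp (⟨0, by omega⟩ : Fin K) W _ hW
  have key : ∀ j : Fin K,
      (L : ℝ) ≤ ∑ k, ent (Fintype.card F) p (Y k) - ent (Fintype.card F) p (Y j) := by
    intro j
    have h1 := ent_add_le_of_mutInfo_zero hq hp _ _ (fun ω => ∑ k, W k ω)
      (fun ω ω' e => Finset.sum_congr rfl fun k _ => congrFun e k) (hRelaySec j)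
    have h2 := ent_pair_le_of_recover hq hp _ _ _
      (fun ω => fun i : {i // i ∈ Finset.univ.erase j} => Y i.1 ω) _ hRec (hY j) (by
        intro ω ω' hU hR
        funext i
        by_cases hi : i = j
        · exact hi ▸ hR
        · exact congrFun hU ⟨i, Finset.mem_erase.2 ⟨hi, Finset.mem_univ _⟩⟩)
    have h3 := ent_le_sum hq hp Y (Finset.univ.erase j)
      (fun ω => fun i : {i // i ∈ Finset.univ.erase j} => Y i.1 ω)
      (fun ω ω' h => funext fun i => h i.1 i.2)
    rw [Finset.sum_erase_eq_sub (Finset.mem_univ j)] at h3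
    linarith
  have hsum := Finset.sum_le_sum fun j (_ : j ∈ Finset.univ) => key j
  simp only [Finset.sum_sub_distrib, Finset.sum_const, Finset.card_univ, Fintype.card_fin,
    nsmul_eq_mul] at hsum
  linarith
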